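/- Let $K$ be a field, let $j,k$ be positive integers, and let $a,b \in K$ with $a^k \neq b^j$. Set $S_1 = \sum_{i=0}^{k-1} X^{ij}\,C(a^{k-1-i})$ and $S_2 = \sum_{i=0}^{j-1} X^{ik}\,C(b^{j-1-i})$ in $K[X]$. Then in the field of rational functions $K(X)$ one has $$\frac{1}{(X^j-a)(X^k-b)} = \frac{1}{b^j-a^k}\cdot\frac{S_1 \bmod (X^k-b)}{X^k-b} \; - \; \frac{1}{b^j-a^k}\cdot\frac{S_2 \bmod (X^j-a)}{X^j-a},$$ where $p \bmod q$ denotes the remainder of polynomial division of $p$ by the monic polynomial $q$. In particular this is a partial fraction expansion: the two numerators have degree strictly less than $k$ and $j$ respectively. -/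

import Mathlib

open Polynomial Finset

/-- Partial fraction expansion of `1/((X^j - a)(X^k - b))` in `K(X)` when `a^k ≠ b^j`:
`1/((X^j-a)(X^k-b)) = (1/(b^j-a^k)) · Frac(S₁/(X^k-b)) - (1/(b^j-a^k)) · Frac(S₂/(X^j-a))`,
where `S₁ = ∑_{i<k} X^{ij} a^{k-1-i}`, `S₂ = ∑_{i<j} X^{ik} b^{j-1-i}`, and the numerators
(the remainders mod the monic denominators) have degree `< k` and `< j` respectively. -/
theorem elliott_partial_fraction {K : Type*} [Field K] (j k : ℕ) (hj : 0 < j) (hk : 0 < k)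
    (a b : K) (hab : a ^ k ≠ b ^ j) :
    (1 : RatFunc K) /
        (algebraMap K[X] (RatFunc K) (X ^ j - C a) * algebraMap K[X] (RatFunc K) (X ^ k - C b)) =
      (algebraMap K[X] (RatFunc K) (C (b ^ j - a ^ k)))⁻¹ *
          (algebraMap K[X] (RatFunc K)
              ((∑ i ∈ range k, X ^ (i * j) * C (a ^ (k - 1 - i))) %ₘ (X ^ k - C b)) /
            algebraMap K[X] (RatFunc K) (X ^ k - C b)) -
        (algebraMap K[X] (RatFunc K) (C (b ^ j - a ^ k)))⁻¹ *
          (algebraMap K[X] (RatFunc K)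
              ((∑ i ∈ range j, X ^ (i * k) * C (b ^ (j - 1 - i))) %ₘ (X ^ j - C a)) /
            algebraMap K[X] (RatFunc K) (X ^ j - C a)) ∧
      ((∑ i ∈ range k, X ^ (i * j) * C (a ^ (k - 1 - i)) : K[X]) %ₘ (X ^ k - C b)).degree <
        (k : ℕ) ∧
      ((∑ i ∈ range j, X ^ (i * k) * C (b ^ (j - 1 - i)) : K[X]) %ₘ (X ^ j - C a)).degree <
        (j : ℕ) := by
  have hP : (X ^ j - C a : K[X]).Monic := monic_X_pow_sub_C a hj.ne'
  have hQ : (X ^ k - C b : K[X]).Monic := monic_X_pow_sub_C b hk.ne'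
  have dP : (X ^ j - C a : K[X]).degree = (j : ℕ) := degree_X_pow_sub_C hj a
  have dQ : (X ^ k - C b : K[X]).degree = (k : ℕ) := degree_X_pow_sub_C hk b
  have h1 : (∑ i ∈ range k, X ^ (i * j) * C (a ^ (k - 1 - i)) : K[X]) * (X ^ j - C a) =
      X ^ (j * k) - C (a ^ k) := by
    have := (Commute.all (X ^ j : K[X]) (C a)).geom_sum₂_mul k
    rw [pow_mul, C_pow, ← this]
    congr 1
    refine Finset.sum_congr rfl fun i _ => ?_
    rw [C_pow, mul_comm i j, pow_mul]
  have h2 : (∑ i ∈ range j, X ^ (i * k) * C (b ^ (j - 1 - i)) : K[X]) * (X ^ k - C b) =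
      X ^ (j * k) - C (b ^ j) := by
    have := (Commute.all (X ^ k : K[X]) (C b)).geom_sum₂_mul j
    rw [mul_comm j k, pow_mul, C_pow, ← this]
    congr 1
    refine Finset.sum_congr rfl fun i _ => ?_
    rw [C_pow, mul_comm i k, pow_mul]
  generalize (∑ i ∈ range k, X ^ (i * j) * C (a ^ (k - 1 - i)) : K[X]) = S at *
  generalize (∑ i ∈ range j, X ^ (i * k) * C (b ^ (j - 1 - i)) : K[X]) = T at *
  have hc : b ^ j - a ^ k ≠ 0 := sub_ne_zero.mpr (Ne.symm hab)
  have h3 : S * (X ^ j - C a) - T * (X ^ k - C b) = C (b ^ j - a ^ k) := by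
    rw [h1, h2, C_sub]; ring
  clear h1 h2
  generalize b ^ j - a ^ k = c at *
  generalize (X ^ j - C a : K[X]) = P at *
  generalize (X ^ k - C b : K[X]) = Q at *
  have d1 : (S %ₘ Q).degree < (k : ℕ) := dQ ▸ degree_modByMonic_lt S hQ
  have d2 : (T %ₘ P).degree < (j : ℕ) := dP ▸ degree_modByMonic_lt T hP
  refine ⟨?_, d1, d2⟩
  have e1 := modByMonic_add_div S Q
  have e2 := modByMonic_add_div T P
  generalize S %ₘ Q = r at *
  generalize T %ₘ P = t at *
  have key : r * P - t * Q = C c := by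
    have hd : (P * Q).degree = ((k + j : ℕ) : WithBot ℕ) := by
      rw [degree_mul, dP, dQ, add_comm]; norm_cast
    have : C c - (r * P - t * Q) = 0 := by
      refine eq_zero_of_dvd_of_degree_lt (p := P * Q) ⟨S /ₘ Q - T /ₘ P, ?_⟩ ?_
      · rw [← h3]
        linear_combination (-P) * e1 + Q * e2
      · rw [hd]
        have a1 : (r * P).degree < ((k + j : ℕ) : WithBot ℕ) := by
          rw [degree_mul, dP, Nat.cast_add]
          exact WithBot.add_lt_add_right (WithBot.natCast_ne_bot j) d1
        have a2 : (t * Q).degree < ((k + j : ℕ) : WithBot ℕ) := by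
          rw [degree_mul, dQ, add_comm k j, Nat.cast_add]
          exact WithBot.add_lt_add_right (WithBot.natCast_ne_bot k) d2
        have a3 : (C c).degree < ((k + j : ℕ) : WithBot ℕ) :=
          lt_of_le_of_lt degree_C_le (by exact_mod_cast (by omega : 0 < k + j))
        exact (degree_sub_le _ _).trans_lt
          (max_lt a3 ((degree_sub_le _ _).trans_lt (max_lt a1 a2)))
    exact (sub_eq_zero.mp this).symm
  have key' := congrArg (algebraMap K[X] (RatFunc K)) key
  rw [map_sub, map_mul, map_mul] at key'
  have nP : algebraMap K[X] (RatFunc K) P ≠ 0 := RatFunc.algebraMap_ne_zero hP.ne_zero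
  have nQ : algebraMap K[X] (RatFunc K) Q ≠ 0 := RatFunc.algebraMap_ne_zero hQ.ne_zero
  have nc : algebraMap K[X] (RatFunc K) (C c) ≠ 0 := RatFunc.algebraMap_ne_zero (C_ne_zero.mpr hc)
  generalize algebraMap K[X] (RatFunc K) (C c) = c' at *
  field_simp
  linear_combination -key'
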